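/- The language L = {w ∈ {a,b,c}* \ {ε} : for every factorization w = u·c·v·c·z in which v contains no occurrence of c, the numbers of a's and b's in v are equal} is not binary-PODWA-recognizable. -/

import Mathlib

/-- A deterministic weighted automaton (DWA) over alphabet `A` with state space `Q`. -/
structure DWA (A : Type) (Q : Type) where
  init : Q
  δ : Q → A → Q
  c : Q → A → ℤ

/-- The extended transition function `δ̂`. -/
def DWA.run {A Q : Type} (M : DWA A Q) (q : Q) (w : List A) : Q :=
  w.foldl M.δ q

/-- The accumulated weight of the run on `w` starting in state `q`. -/
def DWA.valFrom {A Q : Type} (M : DWA A Q) : Q → List A → ℤ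
  | _, [] => 0
  | q, x :: w => M.c q x + M.valFrom (M.δ q x) w

/-- The value `A(w)` of a word: the sum of the weights along the run from the initial state. -/
def DWA.val {A Q : Type} (M : DWA A Q) (w : List A) : ℤ :=
  M.valFrom M.init w

/-- The three-letter alphabet `{a, b, c}`. -/
inductive ABC where
  | a : ABC
  | b : ABC
  | c : ABC
deriving DecidableEq

theorem DWA.valFrom_append_aux {A Q : Type} (M : DWA A Q) (q : Q) (u v : List A) :
    M.valFrom q (u ++ v) = M.valFrom q u + M.valFrom (M.run q u) v := by
  induction u generalizing q with
  | nil => simp [DWA.valFrom, DWA.run]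
  | cons x u ih =>
    have h : M.run q (x :: u) = M.run (M.δ q x) u := rfl
    rw [List.cons_append, DWA.valFrom, DWA.valFrom, ih, h]
    ring

theorem member_aux (n m : ℕ) :
    (∀ u v z : List ABC,
      (ABC.c :: List.replicate n ABC.a) ++ (List.replicate m ABC.b ++ [ABC.c])
        = u ++ ABC.c :: v ++ ABC.c :: z → ABC.c ∉ v →
          v.count ABC.a = v.count ABC.b) ↔ n = m := by
  constructor
  · intro h
    have := h [] (List.replicate n ABC.a ++ List.replicate m ABC.b) [] (by simp) (by simp)
    simpa [List.count_replicate] using this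
  · rintro rfl u v z h hv
    have hc := congrArg (List.count ABC.c) h
    have ha := congrArg (List.count ABC.a) h
    have hb := congrArg (List.count ABC.b) h
    simp [List.count_replicate] at hc
    have hu : u = [] := by
      cases u with
      | nil => rfl
      | cons x u =>
        exfalso
        simp at h
        obtain ⟨rfl, h⟩ := h
        simp at hc
        omega
    have hz : z = [] := by
      rcases List.eq_nil_or_concat z with hz | ⟨z', x, hz⟩
      · exact hz
      · exfalso
        subst hz
        have hl := congrArg List.getLast? h
        simp [List.getLast?_append, List.getLast?_cons] at hl
        subst hl
        simp at hc
        omega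
    subst hu hz
    simp [List.count_replicate] at ha hb
    omega

/-- the language of nonempty words `w` over `{a, b, c}` such that every
`c`-free infix of `w` lying between two occurrences of `c` contains equally many `a`'s and
`b`'s is not binary-PODWA-recognizable. -/
theorem balanced_between_cs_not_binary_podwa_recognizable :
    ¬ ∃ (Q : Type) (_ : Fintype Q) (M : DWA ABC Q),
        ∀ w : List ABC, w ≠ [] →
          (0 < M.val w ↔
            ∀ u v z : List ABC,
              w = u ++ ABC.c :: v ++ ABC.c :: z → ABC.c ∉ v →
                v.count ABC.a = v.count ABC.b) := by
  rintro ⟨Q, _, M, hM⟩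
  obtain ⟨i, j, hij, hq⟩ := Finite.exists_ne_map_eq_of_infinite
    (fun n : ℕ => M.run M.init (ABC.c :: List.replicate n ABC.a))
  have key : ∀ n m : ℕ, 0 < M.valFrom M.init (ABC.c :: List.replicate n ABC.a) +
      M.valFrom (M.run M.init (ABC.c :: List.replicate n ABC.a))
        (List.replicate m ABC.b ++ [ABC.c]) ↔ n = m := by
    intro n m
    rw [← DWA.valFrom_append_aux, ← member_aux n m]
    exact hM _ (by simp)
  have h1 := (key i i).2 rfl
  have h2 := (key j j).2 rfl
  have h3 := mt (key i j).1 hij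
  have h4 := mt (key j i).1 hij.symm
  rw [hq] at h1 h3
  omega
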